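/- arXiv:1008.4954 — 4 statements merged into one kernel-verified Lean document; each statement's English description precedes it below -/
import Mathlib

section
/- Let V be a real vector space with a direct sum decomposition V = V₊ ⊕ V₋, let J : V → V be a linear map with J ∘ J = -id that preserves both V₊ and V₋, and let J̃ : V → V be the linear map equal to -J on V₊ and equal to J on V₋. Let R : V × V × V × V → ℝ be a multilinear map satisfying the curvature symmetries R(x,y,z,u) = -R(y,x,z,u), R(x,y,z,u) = -R(x,y,u,z), R(x,y,z,u) = R(z,u,x,y), together with the Kähler invariance R(Jx,Jy,Jz,Ju) = R(x,y,z,u) for all x,y,z,u ∈ V. Then R(J̃x,J̃y,J̃z,J̃u) = R(x,y,z,u) holds for all x,y,z,u ∈ V if and only if both: (a) R(v₁,v₂,v₃,x) = 0 for all v₁,v₂,v₃ ∈ V₊ and x ∈ V₋, and (b) R(x,y,z,v) = 0 for all x,y,z ∈ V₋ and v ∈ V₊. -/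
/-- A quadrilinear map with the curvature symmetries that vanishes when the first three arguments
lie in `P` and the last in `Q` also vanishes when the argument from `Q` is in any other slot. -/
lemma curvature_eq_zero_of_three_mem
    {V : Type*} [AddCommGroup V] [Module ℝ V] {P Q : Submodule ℝ V}
    {R : V →ₗ[ℝ] V →ₗ[ℝ] V →ₗ[ℝ] V →ₗ[ℝ] ℝ}
    (hR1 : ∀ x y z u : V, R x y z u = -R y x z u)
    (hR2 : ∀ x y z u : V, R x y z u = -R x y u z)
    (hR3 : ∀ x y z u : V, R x y z u = R z u x y)
    (h : ∀ v₁ ∈ P, ∀ v₂ ∈ P, ∀ v₃ ∈ P, ∀ x ∈ Q, R v₁ v₂ v₃ x = 0)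
    {v₁ v₂ v₃ x : V} (h₁ : v₁ ∈ P) (h₂ : v₂ ∈ P) (h₃ : v₃ ∈ P) (hx : x ∈ Q) :
    R v₁ v₂ x v₃ = 0 ∧ R v₁ x v₂ v₃ = 0 ∧ R x v₁ v₂ v₃ = 0 := by
  refine ⟨?_, ?_, ?_⟩
  · rw [hR2, h v₁ h₁ v₂ h₂ v₃ h₃ x hx, neg_zero]
  · rw [hR3, h v₂ h₂ v₃ h₃ v₁ h₁ x hx]
  · rw [hR1, hR3, h v₂ h₂ v₃ h₃ v₁ h₁ x hx, neg_zero]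

/-- Let `V = V₊ ⊕ V₋` be a real vector space, `J` a complex structure
preserving both summands, `Jt` the map equal to `-J` on `V₊` and to `J` on `V₋`, and `R`
a quadrilinear map with the curvature symmetries and Kähler invariance under `J`.
Then `R(Jt x, Jt y, Jt z, Jt u) = R(x,y,z,u)` for all vectors iff `R` vanishes whenever
three arguments are in `V₊` and one in `V₋`, and whenever three arguments are in `V₋`
and one in `V₊`. -/
theorem twisted_curvature_invariance_iff
    {V : Type*} [AddCommGroup V] [Module ℝ V]
    (Vp Vm : Submodule ℝ V) (hcompl : IsCompl Vp Vm)
    (J Jt : V →ₗ[ℝ] V)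
    (hJ2 : ∀ v : V, J (J v) = -v)
    (hJp : ∀ v ∈ Vp, J v ∈ Vp) (hJm : ∀ v ∈ Vm, J v ∈ Vm)
    (hJtp : ∀ v ∈ Vp, Jt v = -J v) (hJtm : ∀ v ∈ Vm, Jt v = J v)
    (R : V →ₗ[ℝ] V →ₗ[ℝ] V →ₗ[ℝ] V →ₗ[ℝ] ℝ)
    (hR1 : ∀ x y z u : V, R x y z u = -R y x z u)
    (hR2 : ∀ x y z u : V, R x y z u = -R x y u z)
    (hR3 : ∀ x y z u : V, R x y z u = R z u x y)
    (hRJ : ∀ x y z u : V, R (J x) (J y) (J z) (J u) = R x y z u) :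
    (∀ x y z u : V, R (Jt x) (Jt y) (Jt z) (Jt u) = R x y z u) ↔
      ((∀ v₁ ∈ Vp, ∀ v₂ ∈ Vp, ∀ v₃ ∈ Vp, ∀ x ∈ Vm, R v₁ v₂ v₃ x = 0) ∧
       (∀ x ∈ Vm, ∀ y ∈ Vm, ∀ z ∈ Vm, ∀ v ∈ Vp, R x y z v = 0)) := by
  have hneg (v y z u : V) : R (-v) y z u = -R v y z u := by
    rw [hR1, hR1 v, map_neg, LinearMap.neg_apply, LinearMap.neg_apply]
  constructor
  · intro h
    refine ⟨fun a ha b hb c hc x hx => ?_, fun x hx y hy z hz v hv => ?_⟩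
    · have key := h a b c x
      simp only [hJtp a ha, hJtp b hb, hJtp c hc, hJtm x hx, hneg, map_neg,
        LinearMap.neg_apply, hRJ] at key
      linarith
    · have key := h x y z v
      simp only [hJtm x hx, hJtm y hy, hJtm z hz, hJtp v hv, map_neg, hRJ] at key
      linarith
  · rintro ⟨hp, hm⟩ x y z u
    have decomp (v : V) : ∃ a ∈ Vp, ∃ b ∈ Vm, a + b = v :=
      Submodule.mem_sup.mp (hcompl.sup_eq_top ▸ Submodule.mem_top)
    obtain ⟨x₁, hx₁, x₂, hx₂, rfl⟩ := decomp x
    obtain ⟨y₁, hy₁, y₂, hy₂, rfl⟩ := decomp y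
    obtain ⟨z₁, hz₁, z₂, hz₂, rfl⟩ := decomp z
    obtain ⟨u₁, hu₁, u₂, hu₂, rfl⟩ := decomp u
    simp only [map_add, hJtp x₁ hx₁, hJtm x₂ hx₂, hJtp y₁ hy₁, hJtm y₂ hy₂, hJtp z₁ hz₁,
      hJtm z₂ hz₂, hJtp u₁ hu₁, hJtm u₂ hu₂, hneg, map_neg, LinearMap.add_apply,
      LinearMap.neg_apply, hRJ]
    linarith [hp x₁ hx₁ y₁ hy₁ z₁ hz₁ u₂ hu₂, hm x₂ hx₂ y₂ hy₂ z₂ hz₂ u₁ hu₁,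
      (curvature_eq_zero_of_three_mem hR1 hR2 hR3 hp hx₁ hy₁ hu₁ hz₂).1,
      (curvature_eq_zero_of_three_mem hR1 hR2 hR3 hp hx₁ hz₁ hu₁ hy₂).2.1,
      (curvature_eq_zero_of_three_mem hR1 hR2 hR3 hp hy₁ hz₁ hu₁ hx₂).2.2,
      (curvature_eq_zero_of_three_mem hR1 hR2 hR3 hm hx₂ hy₂ hu₂ hz₁).1,
      (curvature_eq_zero_of_three_mem hR1 hR2 hR3 hm hx₂ hz₂ hu₂ hy₁).2.1,
      (curvature_eq_zero_of_three_mem hR1 hR2 hR3 hm hy₂ hz₂ hu₂ hx₁).2.2]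
end

section
/- Let V be a finite-dimensional real inner product space, let J : V → V be a linear isometric complex structure (J ∘ J = -id and ⟨Jx, Jy⟩ = ⟨x, y⟩ for all x, y), and let S : V → V be a symmetric linear map (⟨Sx, y⟩ = ⟨x, Sy⟩) with operator norm ‖S‖ < 1 that anticommutes with J (S ∘ J = -J ∘ S). Set A_S := (id + S) ∘ (id - S)⁻¹, J_S := (id - S) ∘ J ∘ (id - S)⁻¹, and g_S(x, y) := ⟨A_S x, y⟩. Then g_S(J_S x, y) = ⟨J x, y⟩ for all x, y ∈ V; that is, the fundamental two-form of the twisted pair (g_S, J_S) coincides with that of the original pair (⟨·,·⟩, J). -/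
open scoped RealInnerProductSpace

/-- If `s` anticommutes with `j` and `1 - s` is a unit, then the Cayley transform
`(1 + s) (1 - s)⁻¹` times the conjugate `(1 - s) j (1 - s)⁻¹` equals `j`. -/
theorem cayley_mul_conj_eq_of_anticommute {R : Type*} [Ring R] {j s : R}
    (hs : IsUnit (1 - s)) (hsj : s * j = -(j * s)) :
    (1 + s) * Ring.inverse (1 - s) * ((1 - s) * j * Ring.inverse (1 - s)) = j := by
  have hcomm : (1 + s) * j = j * (1 - s) := by
    rw [add_mul, hsj, mul_sub, one_mul, mul_one, sub_eq_add_neg]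
  calc (1 + s) * Ring.inverse (1 - s) * ((1 - s) * j * Ring.inverse (1 - s))
      = (1 + s) * (Ring.inverse (1 - s) * (1 - s)) * j * Ring.inverse (1 - s) := by
        simp only [mul_assoc]
    _ = j * ((1 - s) * Ring.inverse (1 - s)) := by
        rw [Ring.inverse_mul_cancel _ hs, mul_one, hcomm, mul_assoc]
    _ = j := by rw [Ring.mul_inverse_cancel _ hs, mul_one]

/-- With `J` an isometric complex structure and `S` a symmetric operator
with `‖S‖ < 1` anticommuting with `J`, setting `A_S = (1+S)(1-S)⁻¹`,
`J_S = (1-S) J (1-S)⁻¹` and `g_S(x,y) = ⟪A_S x, y⟫`, one has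
`g_S(J_S x, y) = ⟪J x, y⟫` for all `x, y`: the fundamental two-form is unchanged by
the twist. -/
theorem twist_fundamental_two_form_unchanged
    {V : Type*} [NormedAddCommGroup V] [InnerProductSpace ℝ V] [FiniteDimensional ℝ V]
    (J S : V →L[ℝ] V)
    (hJ2 : J * J = -1)
    (hJiso : ∀ x y : V, ⟪J x, J y⟫ = ⟪x, y⟫)
    (hSsymm : ∀ x y : V, ⟪S x, y⟫ = ⟪x, S y⟫)
    (hSnorm : ‖S‖ < 1)
    (hSJ : S * J = -(J * S)) :
    ∀ x y : V,
      ⟪((1 + S) * Ring.inverse (1 - S)) (((1 - S) * J * Ring.inverse (1 - S)) x), y⟫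
        = ⟪J x, y⟫ := by
  intro x y
  have : CompleteSpace V := FiniteDimensional.complete ℝ V
  have hunit : IsUnit (1 - S) := isUnit_one_sub_of_norm_lt_one hSnorm
  rw [← mul_apply_eq_comp, cayley_mul_conj_eq_of_anticommute hunit hSJ]
end

section
/- Let V be a finite-dimensional real inner product space, let J : V → V be a linear isometric complex structure (J ∘ J = -id and ⟨Jx, Jy⟩ = ⟨x, y⟩ for all x, y), and let S : V → V be a symmetric linear map (⟨Sx, y⟩ = ⟨x, Sy⟩) with operator norm ‖S‖ < 1 that anticommutes with J (S ∘ J = -J ∘ S). Set J_S := (id - S) ∘ J ∘ (id - S)⁻¹ and g_S(x, y) := ⟨(id + S)(id - S)⁻¹ x, y⟩. Then J_S is orthogonal with respect to g_S: g_S(J_S x, J_S y) = g_S(x, y) for all x, y ∈ V. -/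
open scoped RealInnerProductSpace

/-- With `J` an isometric complex structure and `S` a symmetric operator
with `‖S‖ < 1` anticommuting with `J`, setting `J_S = (1-S) J (1-S)⁻¹` and
`g_S(x,y) = ⟪(1+S)(1-S)⁻¹ x, y⟫`, the twisted structure `J_S` is orthogonal for `g_S`:
`g_S(J_S x, J_S y) = g_S(x, y)` for all `x, y`. -/
theorem twist_complex_structure_orthogonal
    {V : Type*} [NormedAddCommGroup V] [InnerProductSpace ℝ V] [FiniteDimensional ℝ V]
    (J S : V →L[ℝ] V)
    (hJ2 : J * J = -1)
    (hJiso : ∀ x y : V, ⟪J x, J y⟫ = ⟪x, y⟫)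
    (hSsymm : ∀ x y : V, ⟪S x, y⟫ = ⟪x, S y⟫)
    (hSnorm : ‖S‖ < 1)
    (hSJ : S * J = -(J * S)) :
    ∀ x y : V,
      ⟪((1 + S) * Ring.inverse (1 - S)) (((1 - S) * J * Ring.inverse (1 - S)) x),
          ((1 - S) * J * Ring.inverse (1 - S)) y⟫
        = ⟪((1 + S) * Ring.inverse (1 - S)) x, y⟫ := by
  have : CompleteSpace V := FiniteDimensional.complete ℝ V
  have hunit : IsUnit (1 - S) := isUnit_one_sub_of_norm_lt_one hSnorm
  have hinv : ∀ u : V, Ring.inverse (1 - S) (u - S u) = u := fun u => by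
    simpa using DFunLike.congr_fun (Ring.inverse_mul_cancel _ hunit) u
  have hsurj : ∀ x : V, ∃ u : V, u - S u = x := fun x =>
    ⟨Ring.inverse (1 - S) x, by
      simpa using DFunLike.congr_fun (Ring.mul_inverse_cancel _ hunit) x⟩
  have hanti : ∀ u : V, S (J u) = -J (S u) := fun u => by
    simpa using DFunLike.congr_fun hSJ u
  intro x y
  obtain ⟨u, rfl⟩ := hsurj x
  obtain ⟨v, rfl⟩ := hsurj y
  simp only [mul_apply_eq_comp, sub_apply, add_apply, one_apply_eq_self, hinv]
  simp only [hanti, inner_add_left, inner_sub_right, inner_neg_left, inner_neg_right,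
    hJiso, hSsymm]
  ring
end

section
/- Let V be a finite-dimensional real inner product space, let J : V → V be a linear isometric complex structure (J ∘ J = -id and ⟨Jx, Jy⟩ = ⟨x, y⟩ for all x, y), and let S : V → V be a symmetric linear map with operator norm ‖S‖ < 1 that anticommutes with J (S ∘ J = -J ∘ S). Set A_S := (id + S)(id - S)⁻¹. Then (id - S) ∘ J ∘ (id - S)⁻¹ = J ∘ A_S, and A_S ∘ J = J ∘ A_S⁻¹. -/
open scoped RealInnerProductSpace

/-- In a ring, if `S` anticommutes with `J` and `1 - S`, `1 + S` are units, then `J` conjugates the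
Cayley transform `(1 + S) (1 - S)⁻¹` to its inverse. -/
theorem cayley_mul_eq_mul_inverse_of_anticommute {R : Type*} [Ring R] {J S : R}
    (hsub : IsUnit (1 - S)) (hadd : IsUnit (1 + S)) (hSJ : S * J = -(J * S)) :
    ((1 + S) * Ring.inverse (1 - S)) * J
      = J * Ring.inverse ((1 + S) * Ring.inverse (1 - S)) := by
  have hsubJ : (1 - S) * J = J * (1 + S) := by
    rw [sub_mul, hSJ, mul_add, one_mul, mul_one, sub_neg_eq_add]
  have haddJ : (1 + S) * J = J * (1 - S) := by
    rw [add_mul, hSJ, mul_sub, one_mul, mul_one, sub_eq_add_neg]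
  obtain ⟨u, hu⟩ := hsub
  obtain ⟨v, hv⟩ := hadd
  rw [← hu, ← hv] at hsubJ haddJ ⊢
  have hinvJ : (↑u⁻¹ : R) * J = J * ↑v⁻¹ := by
    rw [Units.inv_mul_eq_iff_eq_mul, ← mul_assoc, hsubJ, Units.mul_inv_cancel_right]
  rw [Ring.inverse_unit, ← Units.val_mul, Ring.inverse_unit, mul_inv_rev, inv_inv,
    Units.val_mul, Units.val_mul, mul_assoc, hinvJ, ← mul_assoc, haddJ, mul_assoc]

/-- With `J` an isometric complex structure and `S` a symmetric operator
with `‖S‖ < 1` anticommuting with `J`, setting `A_S = (1+S)(1-S)⁻¹` one has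
`(1-S) J (1-S)⁻¹ = J A_S` and `A_S J = J A_S⁻¹`. -/
theorem twist_operator_identities
    {V : Type*} [NormedAddCommGroup V] [InnerProductSpace ℝ V] [FiniteDimensional ℝ V]
    (J S : V →L[ℝ] V)
    (hJ2 : J * J = -1)
    (hJiso : ∀ x y : V, ⟪J x, J y⟫ = ⟪x, y⟫)
    (hSsymm : ∀ x y : V, ⟪S x, y⟫ = ⟪x, S y⟫)
    (hSnorm : ‖S‖ < 1)
    (hSJ : S * J = -(J * S)) :
    (1 - S) * J * Ring.inverse (1 - S) = J * ((1 + S) * Ring.inverse (1 - S)) ∧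
      ((1 + S) * Ring.inverse (1 - S)) * J
        = J * Ring.inverse ((1 + S) * Ring.inverse (1 - S)) := by
  have : CompleteSpace V := FiniteDimensional.complete ℝ V
  have hsub : IsUnit (1 - S) := isUnit_one_sub_of_norm_lt_one hSnorm
  have hadd : IsUnit (1 + S) := by
    simpa using isUnit_one_sub_of_norm_lt_one (x := -S) (by rwa [norm_neg])
  refine ⟨?_, cayley_mul_eq_mul_inverse_of_anticommute hsub hadd hSJ⟩
  rw [← mul_assoc, sub_mul, hSJ, mul_add, one_mul, mul_one, sub_neg_eq_add]
end
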